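/- There exists a class of languages that is behaviorally correctly learnable from informants by a full-information learner but not by any finitely cautious one: [Inf G Bc] \ [Inf G Caut_Fin Bc] ≠ ∅; in fact the class consisting of ℕ together with all finite subsets of ℕ witnesses this separation. -/

import Mathlib

open Filter Classical

namespace InfBc

/-! ### Basic notions: r.e. sets, informants, learners -/

/-- The `e`-th recursively enumerable set (via an acceptable numbering of
partial computable functions, `W e = dom φ_e`). -/
def W (e : ℕ) : Set ℕ := {x | ((Denumerable.ofNat Nat.Partrec.Code e).eval x).Dom}

/-- A language is recursively enumerable. -/
def RE (L : Set ℕ) : Prop := ∃ e, W e = L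

abbrev Datum := ℕ × Bool
abbrev Seq := List Datum
abbrev Informant := ℕ → Datum
abbrev HypSeq := ℕ → Part ℕ
/-- Learners are partial functions; all input types are coded into `ℕ`. -/
abbrev Learner := ℕ →. ℕ
abbrev Restriction := HypSeq → Informant → Prop

/-- Positive information of an infinite sequence. -/
def posI (I : Informant) : Set ℕ := {x | ∃ n, I n = (x, true)}
/-- Negative information of an infinite sequence. -/
def negI (I : Informant) : Set ℕ := {x | ∃ n, I n = (x, false)}

/-- `I` is an informant for the language `L`. -/
def IsInformant (I : Informant) (L : Set ℕ) : Prop := posI I = L ∧ negI I = Lᶜ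

/-- `I` is an informant (for some language), i.e. `I ∈ Inf`. -/
def IsInf (I : Informant) : Prop := IsInformant I (posI I)

/-- `I` is a canonical informant. -/
def Canonical (I : Informant) : Prop := ∀ x, I x = (x, true) ∨ I x = (x, false)

/-- `I[n]`, the length-`n` initial segment of `I`. -/
def segment (I : Informant) (n : ℕ) : Seq := (List.range n).map I

/-- Positive information of a finite sequence. -/
def posS (σ : Seq) : Set ℕ := {x | (x, true) ∈ σ}
/-- Negative information of a finite sequence. -/
def negS (σ : Seq) : Set ℕ := {x | (x, false) ∈ σ}
/-- The content of a finite sequence, as a set. -/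
def contentS (σ : Seq) : Set Datum := {a | a ∈ σ}

/-! ### Interaction operators -/

abbrev InteractionOperator := Learner → Informant → HypSeq

/-- Full-information (Gold-style) interaction: `G(h,I)(i) = h(I[i])`. -/
def Gop : InteractionOperator := fun h I i => h (Encodable.encode (segment I i))

/-- Set-driven interaction: `Sd(h,I)(i) = h(content(I[i]))`. -/
def Sdop : InteractionOperator := fun h I i => h (Encodable.encode (segment I i).toFinset)

/-- The iterated evaluation of an iterative learner on a finite sequence:
start with the initial hypothesis `h(none)` and feed the data one by one. -/
def iterExtend (h : Learner) (σ : Seq) : Part ℕ :=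
  σ.foldl (fun pe a => pe.bind fun e => h (Encodable.encode (some (e, a))))
    (h (Encodable.encode (none : Option (ℕ × Datum))))

/-- Iterative interaction: `It(h,I)(i)` is obtained by feeding `I[i]` one datum
at a time, each time updating the previous hypothesis. -/
def Itop : InteractionOperator := fun h I i => iterExtend h (segment I i)

/-- An iterative learner is confluent if the order and multiplicity in which
the content is presented does not matter. -/
def ConfluentLearner (h : Learner) : Prop :=
  ∀ σ τ : Seq, contentS σ = contentS τ → iterExtend h σ = iterExtend h τ

/-- Confluently iterative interaction. -/
noncomputable def CflItop : InteractionOperator := fun h I i =>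
  if ConfluentLearner h then iterExtend h (segment I i) else Part.none

/-- `β ≼ β'`: every (partial computable) `β`-learner can be translated into a
`β'`-learner with the same hypothesis sequence on every informant. -/
def OpLe (β β' : InteractionOperator) : Prop :=
  ∀ h : Learner, Partrec h → ∃ h' : Learner, Partrec h' ∧
    ∀ I : Informant, IsInf I → ∀ n, β h I n = β' h' I n

/-! ### Learning restrictions -/

/-- The trivial restriction `T`. -/
def TT : Restriction := fun _ _ => True

/-- Explanatory identification. -/
def Ex : Restriction := fun p I =>
  ∃ q, W q = posI I ∧ ∀ᶠ n in atTop, p n = Part.some q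

/-- Behaviorally correct identification. -/
def Bc : Restriction := fun p I => ∀ᶠ n in atTop, ∃ e ∈ p n, W e = posI I

/-- Consistency of a hypothesis with a finite sequence of data. -/
def ConsH (e : ℕ) (σ : Seq) : Prop := posS σ ⊆ W e ∧ negS σ ∩ W e = ∅

/-- Consistency of a hypothesis sequence with an informant. -/
def Cons : Restriction := fun p I => ∀ n, ∃ e ∈ p n, ConsH e (segment I n)

/-- Strongly monotone. -/
def SMon : Restriction := fun p _ =>
  ∀ s t, s ≤ t → ∀ e ∈ p s, ∀ e' ∈ p t, W e ⊆ W e'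

/-- Dual strongly monotone. -/
def SMond : Restriction := fun p _ =>
  ∀ s t, s ≤ t → ∀ e ∈ p s, ∀ e' ∈ p t, W e' ⊆ W e

/-- Monotone. -/
def Mon : Restriction := fun p I =>
  ∀ s t, s ≤ t → ∀ e ∈ p s, ∀ e' ∈ p t, W e ∩ posI I ⊆ W e' ∩ posI I

/-- Dual monotone. -/
def Mond : Restriction := fun p I =>
  ∀ s t, s ≤ t → ∀ e ∈ p s, ∀ e' ∈ p t, (W e)ᶜ ∩ negI I ⊆ (W e')ᶜ ∩ negI I

/-- Weakly monotone. -/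
def WMon : Restriction := fun p I =>
  ∀ s t, s ≤ t → ∀ e ∈ p s, ConsH e (segment I t) → ∀ e' ∈ p t, W e ⊆ W e'

/-- Dual weakly monotone. -/
def WMond : Restriction := fun p I =>
  ∀ s t, s ≤ t → ∀ e ∈ p s, ConsH e (segment I t) → ∀ e' ∈ p t, W e' ⊆ W e

/-- Cautious. -/
def Caut : Restriction := fun p _ =>
  ∀ s t, s < t → ∀ e ∈ p s, ∀ e' ∈ p t, ¬ W e' ⊂ W e

/-- Target cautious. -/
def CautTar : Restriction := fun p I =>
  ∀ s, ∀ e ∈ p s, ¬ posI I ⊂ W e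

/-- Finitely cautious. -/
def CautFin : Restriction := fun p _ =>
  ∀ s t, s < t → ∀ e ∈ p s, ∀ e' ∈ p t, W e' ⊂ W e → (W e').Infinite

/-- Infinitely cautious. -/
def CautInf : Restriction := fun p _ =>
  ∀ s t, s < t → ∀ e ∈ p s, ∀ e' ∈ p t, W e' ⊂ W e → (W e').Finite

/-! ### Learnability -/

/-- The class of admissible learners: all partial computable learners. -/
def AllL : Learner → Prop := fun _ => True
/-- The class of admissible learners: total computable learners (`ℛ`). -/
def TotalL : Learner → Prop := fun h => ∀ x, (h x).Dom
/-- Admissible informants: all informants (`Inf`). -/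
def AllI : Informant → Prop := fun _ => True

/-- `h` learns `L` in the setting given by admissible informants `P`,
interaction operator `β` and local restriction `δ`. -/
def LearnsWith (P : Informant → Prop) (β : InteractionOperator) (δ : Restriction)
    (h : Learner) (L : Set ℕ) : Prop :=
  RE L ∧ ∀ I : Informant, P I → IsInformant I L → δ (β h I) I

/-- `[τ(α) C P β δ]`: the collection of all classes of languages learnable by
some learner in `C` that satisfies the global restriction `α` on all admissible
informants, under interaction operator `β` and local restriction `δ`. -/
def Learnable (α : Restriction) (C : Learner → Prop) (P : Informant → Prop)
    (β : InteractionOperator) (δ : Restriction) : Set (Set (Set ℕ)) :=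
  {𝓛 | ∃ h : Learner, Partrec h ∧ C h ∧
        (∀ I : Informant, IsInf I → P I → α (β h I) I) ∧
        ∀ L ∈ 𝓛, LearnsWith P β δ h L}

/-! ### Properties of restrictions -/

/-- A learning restriction is delayable if it is preserved under postponing
hypotheses along a non-decreasing unbounded function. -/
def Delayable (δ : Restriction) : Prop :=
  ∀ I I' : Informant, IsInf I → IsInf I' → Set.range I = Set.range I' →
    ∀ (p : HypSeq) (s : ℕ → ℕ), Monotone s → (∀ m, ∃ n, m ≤ s n) →
      δ p I → (∀ n, contentS (segment I (s n)) ⊆ contentS (segment I' n)) →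
      δ (fun n => p (s n)) I'

/-- A learning restriction is semantic if it is indifferent to replacing the
hypothesis sequence by a semantically equivalent one. -/
def Semantic (δ : Restriction) : Prop :=
  ∀ (p p' : HypSeq) (I : Informant), δ p I →
    (∀ i, (p i).Dom ↔ (p' i).Dom) →
    (∀ i, ∀ e ∈ p i, ∀ e' ∈ p' i, W e = W e') →
    δ p' I


/-! To learn, conjecture `ℕ` until the first negative datum appears and the set of positive data
from then on. Conversely, on the informant `(0, 1), (1, 1), …` a learner of the class has to
conjecture `ℕ` after some number `n` of data. These data also begin an informant for the finite set
`{0, …, n - 1}`, on which the learner must later descend from `ℕ` to this set. -/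

section Segments

variable {I J : Informant} {n : ℕ}

theorem mem_segment {a : Datum} : a ∈ segment I n ↔ ∃ m < n, I m = a := by
  simp [segment]

theorem segment_congr (h : ∀ m < n, I m = J m) : segment I n = segment J n :=
  List.map_congr_left fun m hm => h m (List.mem_range.1 hm)

theorem posS_segment_subset : posS (segment I n) ⊆ posI I := fun _ hx =>
  let ⟨m, _, hm⟩ := mem_segment.1 hx
  ⟨m, hm⟩

theorem negS_segment_subset : negS (segment I n) ⊆ negI I := fun _ hx =>
  let ⟨m, _, hm⟩ := mem_segment.1 hx
  ⟨m, hm⟩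

theorem eventually_mem_segment {a : Datum} {m : ℕ} (hm : I m = a) :
    ∀ᶠ n in atTop, a ∈ segment I n := by
  filter_upwards [eventually_gt_atTop m] with n hmn
  exact mem_segment.2 ⟨m, hmn, hm⟩

theorem eventually_posS_segment_eq (hI : (posI I).Finite) :
    ∀ᶠ n in atTop, posS (segment I n) = posI I := by
  have all_seen : ∀ᶠ n in atTop, ∀ x ∈ posI I, x ∈ posS (segment I n) := by
    refine (eventually_all_finite hI).2 ?_
    rintro x ⟨m, hm⟩
    exact eventually_mem_segment hm
  filter_upwards [all_seen] with n hn
  exact posS_segment_subset.antisymm hn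

theorem eventually_negS_segment_nonempty (hI : (negI I).Nonempty) :
    ∀ᶠ n in atTop, (negS (segment I n)).Nonempty := by
  obtain ⟨x, m, hm⟩ := hI
  exact (eventually_mem_segment hm).mono fun _ hx => ⟨x, hx⟩

end Segments

section CanonicalInformant

/-- The informant for `L` that lists the natural numbers in increasing order, each with its
membership in `L`. -/
noncomputable def canonicalInformant (L : Set ℕ) : Informant := fun x => (x, decide (x ∈ L))

theorem posI_canonicalInformant (L : Set ℕ) : posI (canonicalInformant L) = L := by
  ext x
  simp [posI, canonicalInformant]

theorem negI_canonicalInformant (L : Set ℕ) : negI (canonicalInformant L) = Lᶜ := by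
  ext x
  simp [negI, canonicalInformant]

theorem isInformant_canonicalInformant (L : Set ℕ) : IsInformant (canonicalInformant L) L :=
  ⟨posI_canonicalInformant L, negI_canonicalInformant L⟩

theorem segment_canonicalInformant_inter_Iio (L : Set ℕ) (n : ℕ) :
    segment (canonicalInformant (L ∩ Set.Iio n)) n = segment (canonicalInformant L) n :=
  segment_congr fun m hm => by simp [canonicalInformant, hm]

end CanonicalInformant

section Learnability

theorem exists_computable_W_eq {α : Type*} [Primcodable α] {S : α → Set ℕ}
    (hS : REPred fun q : α × ℕ => q.2 ∈ S q.1) :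
    ∃ g : α → ℕ, Computable g ∧ ∀ a, W (g a) = S a := by
  obtain ⟨c, hc⟩ := Nat.Partrec.Code.exists_code.1 hS
  refine ⟨fun a => Encodable.encode (c.curry (Encodable.encode a)), ?_, fun a => ?_⟩
  · exact (Primrec.encode.comp
      (Nat.Partrec.Code.primrec₂_curry.comp (Primrec.const c) Primrec.encode)).to_comp
  · ext x
    simp [W, Nat.Partrec.Code.eval_curry, hc, Part.assert]

theorem exists_partrec_gop_eq {g : Seq → ℕ} (hg : Computable g) :
    ∃ h : Learner, Partrec h ∧ ∀ I n, Gop h I n = Part.some (g (segment I n)) :=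
  ⟨fun k => Part.map g (Encodable.decode k : Option Seq),
    Computable.decode.ofOption.map (hg.comp Computable.snd).to₂,
    fun I n => by simp [Gop]⟩

theorem mem_learnable_bc_of_eventually_eq {S : Seq → Set ℕ} {𝓛 : Set (Set ℕ)}
    (hS : REPred fun q : Seq × ℕ => q.2 ∈ S q.1)
    (hlim : ∀ L ∈ 𝓛, ∀ I, IsInformant I L → ∀ᶠ n in atTop, S (segment I n) = L) :
    𝓛 ∈ Learnable TT AllL AllI Gop Bc := by
  obtain ⟨g, hg, hW⟩ := exists_computable_W_eq hS
  obtain ⟨h, hh, hGop⟩ := exists_partrec_gop_eq hg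
  refine ⟨h, hh, trivial, fun _ _ _ => trivial, fun L hL => ⟨?_, fun I _ hI => ?_⟩⟩
  · obtain ⟨n, hn⟩ := (hlim L hL _ (isInformant_canonicalInformant L)).exists
    exact ⟨_, (hW _).trans hn⟩
  · filter_upwards [hlim L hL I hI] with n hn
    exact ⟨_, hGop I n ▸ Part.mem_some _, by rw [hW, hn, hI.1]⟩

theorem CautFin.not_bc_of_ssubset {p : HypSeq} {I : Informant} (hcaut : CautFin p I)
    (hfin : (posI I).Finite) {s e : ℕ} (he : e ∈ p s) (hlt : posI I ⊂ W e) : ¬ Bc p I := by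
  intro hBc
  obtain ⟨t, ⟨e', he', hWe'⟩, hst⟩ := (hBc.and (eventually_gt_atTop s)).exists
  rw [← hWe'] at hfin hlt
  exact hcaut s t hst e he e' he' hlt hfin

theorem notMem_learnable_cautFin_bc {α : Restriction} {C : Learner → Prop}
    {P : Informant → Prop} (hP : ∀ L, P (canonicalInformant L)) {𝓛 : Set (Set ℕ)} {L : Set ℕ}
    (hinf : L.Infinite) (hL : L ∈ 𝓛) (htrunc : ∀ n, L ∩ Set.Iio n ∈ 𝓛) :
    𝓛 ∉ Learnable α C P Gop (fun p I => CautFin p I ∧ Bc p I) := by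
  rintro ⟨h, -, -, -, hlearn⟩
  obtain ⟨-, hBc⟩ := (hlearn L hL).2 _ (hP L) (isInformant_canonicalInformant L)
  obtain ⟨n, e, he, hWe⟩ := hBc.exists
  obtain ⟨hcaut, hBc_trunc⟩ :=
    (hlearn _ (htrunc n)).2 _ (hP _) (isInformant_canonicalInformant (L ∩ Set.Iio n))
  have he_trunc : e ∈ Gop h (canonicalInformant (L ∩ Set.Iio n)) n := by
    rwa [Gop, segment_canonicalInformant_inter_Iio]
  have trunc_finite : (L ∩ Set.Iio n).Finite := (Set.finite_Iio n).inter_of_right L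
  have trunc_ssubset : L ∩ Set.Iio n ⊂ L :=
    Set.inter_subset_left.ssubset_of_ne fun heq => hinf (heq ▸ trunc_finite)
  refine hcaut.not_bc_of_ssubset ?_ he_trunc ?_ hBc_trunc
  · rwa [posI_canonicalInformant]
  · rwa [hWe, posI_canonicalInformant, posI_canonicalInformant]

end Learnability

section Conjecture

/-- The language conjectured from the data `σ` when learning `ℕ` together with the finite sets: `ℕ`
as long as `σ` contains no negative datum, the set of positive data of `σ` afterwards. -/
def conjecture (σ : Seq) : Set ℕ := {x | negS σ = ∅ ∨ x ∈ posS σ}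

theorem conjecture_of_negS_eq_empty {σ : Seq} (hσ : negS σ = ∅) : conjecture σ = Set.univ := by
  simp [conjecture, hσ]

theorem conjecture_of_negS_nonempty {σ : Seq} (hσ : (negS σ).Nonempty) :
    conjecture σ = posS σ := by
  simp [conjecture, hσ.ne_empty]

theorem negS_eq_empty_iff {σ : Seq} : negS σ = ∅ ↔ ∀ a ∈ σ, a.2 = true := by
  simp [negS, Set.eq_empty_iff_forall_notMem]

theorem primrecPred_mem_conjecture :
    PrimrecPred fun q : Seq × ℕ => q.2 ∈ conjecture q.1 := by
  have no_negative : PrimrecPred fun q : Seq × ℕ => negS q.1 = ∅ := by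
    simp only [negS_eq_empty_iff]
    exact (PrimrecPred.forall_mem_list
      (Primrec.eq.comp Primrec.snd (Primrec.const true))).comp Primrec.fst
  have positive : PrimrecPred fun q : Seq × ℕ => q.2 ∈ posS q.1 := by
    have eq_datum : PrimrecRel fun (a : Datum) (x : ℕ) => a = (x, true) :=
      Primrec.eq.comp Primrec.fst (Primrec.pair Primrec.snd (Primrec.const true))
    simpa [posS] using eq_datum.exists_mem_list.comp Primrec.fst Primrec.snd
  exact no_negative.or positive

variable {I : Informant}

theorem conjecture_segment_eq_univ (hI : IsInformant I Set.univ) (n : ℕ) :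
    conjecture (segment I n) = Set.univ := by
  have negI_eq_empty : negI I = ∅ := hI.2.trans Set.compl_univ
  exact conjecture_of_negS_eq_empty (Set.subset_eq_empty negS_segment_subset negI_eq_empty)

theorem eventually_conjecture_segment_eq {L : Set ℕ} (hL : L.Finite) (hI : IsInformant I L) :
    ∀ᶠ n in atTop, conjecture (segment I n) = L := by
  obtain ⟨rfl, hneg⟩ := hI
  have negI_nonempty : (negI I).Nonempty := hneg ▸ hL.infinite_compl.nonempty
  filter_upwards [eventually_posS_segment_eq hL,
    eventually_negS_segment_nonempty negI_nonempty] with n hpos hnonempty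
  rw [conjecture_of_negS_nonempty hnonempty, hpos]

end Conjecture

/-- The class consisting of `ℕ` together with all finite
languages is in `[Inf G Bc]` but not in `[Inf G Caut_Fin Bc]`; in particular
`[Inf G Bc] \ [Inf G Caut_Fin Bc] ≠ ∅`. -/
theorem cautFin_proper :
    insert Set.univ {L : Set ℕ | L.Finite} ∈ Learnable TT AllL AllI Gop Bc ∧
    insert Set.univ {L : Set ℕ | L.Finite} ∉
      Learnable TT AllL AllI Gop (fun p I => CautFin p I ∧ Bc p I) := by
  constructor
  · refine mem_learnable_bc_of_eventually_eq primrecPred_mem_conjecture.computablePred.to_re ?_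
    rintro L (rfl | hL) I hI
    · exact Eventually.of_forall (conjecture_segment_eq_univ hI)
    · exact eventually_conjecture_segment_eq hL hI
  · exact notMem_learnable_cautFin_bc (fun _ => trivial) Set.infinite_univ
      (Set.mem_insert _ _) fun n => Or.inr ((Set.finite_Iio n).inter_of_right Set.univ)

end InfBc
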